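/- Let (Ω, F, P) be a probability space with a filtration (F_τ)_{τ≥0}, and let z_0, …, z_{E-1} : Ω → ℝ^d (E ≥ 1) be random vectors such that each z_τ is F_{τ+1}-measurable, the conditional expectation E[z_τ | F_τ] = 0 almost surely, and E[exp(‖z_τ‖²) | F_τ] ≤ 2 almost surely, for all τ ∈ {0, …, E-1}. Then the normalized sum z := (1/(2√E))·∑_{τ=0}^{E-1} z_τ satisfies E[z | F_0] = 0 almost surely and the sub-Gaussian tail bound E[exp(‖z‖²) | F_0] ≤ 2 almost surely; equivalently, E[exp(‖∑_{τ=0}^{E-1} z_τ‖²/(4E)) | F_0] ≤ 2 almost surely. -/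

import Mathlib

open MeasureTheory
open scoped BigOperators

/-!
Writing `S k` for the partial sums, the idea is to propagate the bound
`E[exp (‖S k‖² / (b + c k)) | F 0] ≤ ((b + c k) / b) ^ (log 2 / c)` one increment at a time, the
denominator of the exponent growing linearly with `k`. For `κ ≥ log 2 + 1 / 4` an increment `Z`
satisfies `E[exp (⟪y, Z⟫ - κ ‖y‖²) | F k] ≤ 1` for every `F k`-measurable `y`, and convexity of the
exponential turns this, with `y` a multiple of `S k` and `c = 4 κ`, into the inductive step.
With `κ = 31 / 32` and `b = E / 8` the denominator grows from `E / 8` to `4 E` and the bound is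
`32 ^ (8 log 2 / 31) ≤ 32 ^ (1 / 5) = 2`.
-/

section Exponential

open Real

lemma exp_le_add_exp_sq (t : ℝ) : exp t ≤ t + exp (t ^ 2) := by
  have hsq : t ^ 2 + 1 ≤ exp (t ^ 2) := add_one_le_exp _
  rcases le_or_gt |t| 1 with ht | ht
  · linarith [(abs_le.1 (abs_exp_sub_one_sub_id_le ht)).2]
  · rcases lt_abs.1 ht with ht | ht
    · have : exp t ≤ exp (t ^ 2) := exp_le_exp.2 (by nlinarith)
      linarith
    · have : exp t ≤ 1 := exp_le_one_iff.2 (by linarith)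
      nlinarith

lemma exp_le_add_exp_abs (t : ℝ) : exp t ≤ t + exp |t| := by
  rcases le_total 0 t with ht | ht
  · rw [abs_of_nonneg ht]
    linarith
  · rw [abs_of_nonpos ht]
    linarith [exp_le_one_iff.2 ht, add_one_le_exp (-t)]

lemma exp_mul_sub_log_le {K ρ : ℝ} (hK : 0 < K) (hρ₀ : 0 ≤ ρ) (hρ₁ : ρ ≤ 1) (v : ℝ) :
    exp (ρ * (v - log K)) ≤ 1 + ρ * (exp v / K - 1) := by
  have hconv := convexOn_exp.2 (Set.mem_univ 0) (Set.mem_univ (v - log K))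
    (sub_nonneg.2 hρ₁) hρ₀ (sub_add_cancel 1 ρ)
  simp only [smul_eq_mul, mul_zero, zero_add, exp_zero, exp_sub, exp_log hK] at hconv
  linarith

lemma rpow_inv_add_le_div_rpow {K b c : ℝ} (hK : 1 ≤ K) (hb : 0 < b) (hc : 0 < c) :
    K ^ (b + c)⁻¹ ≤ ((b + c) / b) ^ (log K / c) := by
  have hratio : 0 < (b + c) / b := by positivity
  have hlog : c / (b + c) ≤ log ((b + c) / b) := by
    refine le_of_eq_of_le ?_ (one_sub_inv_le_log_of_pos hratio)
    field_simp
    ring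
  rw [rpow_def_of_pos (by linarith), rpow_def_of_pos hratio]
  refine exp_le_exp.2 ?_
  calc log K * (b + c)⁻¹ = log K / c * (c / (b + c)) := by field_simp
    _ ≤ log K / c * log ((b + c) / b) := by have := log_nonneg hK; gcongr
    _ = log ((b + c) / b) * (log K / c) := mul_comm _ _

end Exponential

section NormedSpace

lemma norm_one_div_two_mul_sqrt_smul_sq {V : Type*} [NormedAddCommGroup V]
    [NormedSpace ℝ V] {t : ℝ} (ht : 0 ≤ t) (x : V) :
    ‖(1 / (2 * √t)) • x‖ ^ 2 = ‖x‖ ^ 2 / (4 * t) := by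
  rw [norm_smul, mul_pow, Real.norm_eq_abs, sq_abs, div_pow, mul_pow, Real.sq_sqrt ht]
  ring

end NormedSpace

section InnerProductSpace

open Real

variable {V : Type*} [NormedAddCommGroup V] [InnerProductSpace ℝ V]

-- When `E[exp (‖z‖ ^ 2)] ≤ 2`, the exponential of `‖z‖ ^ 2 - log 2` has mean at most one, and by
-- convexity so has that of its multiple by a weight in `[0, 1]`.
lemma exp_inner_le {κ : ℝ} (hκ : log 2 + 1 / 4 ≤ κ) (y z : V) :
    exp (inner ℝ y z) ≤ inner ℝ y z +
      exp (κ * ‖y‖ ^ 2 + min (‖y‖ ^ 2) 1 * (‖z‖ ^ 2 - log 2)) := by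
  have hinner : |inner ℝ y z| ≤ ‖y‖ * ‖z‖ := abs_real_inner_le_norm y z
  rcases le_total (‖y‖ ^ 2) 1 with hy | hy
  · refine (exp_le_add_exp_sq _).trans ?_
    gcongr
    have hsq : inner ℝ y z ^ 2 ≤ ‖y‖ ^ 2 * ‖z‖ ^ 2 := by
      rw [← mul_pow, ← sq_abs]
      gcongr
    rw [min_eq_left hy]
    nlinarith [sq_nonneg ‖y‖]
  · refine (exp_le_add_exp_abs _).trans ?_
    gcongr
    have hlog : 0 ≤ log 2 := log_nonneg one_le_two
    rw [min_eq_right hy]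
    nlinarith [sq_nonneg (‖y‖ / 2 - ‖z‖)]

lemma exp_inner_sub_le {κ : ℝ} (hκ : log 2 + 1 / 4 ≤ κ) (y z : V) :
    exp (inner ℝ y z - κ * ‖y‖ ^ 2) ≤
      1 + inner ℝ (exp (-(κ * ‖y‖ ^ 2)) • y) z +
        min (‖y‖ ^ 2) 1 * (exp (‖z‖ ^ 2) / 2 - 1) := by
  set ρ := min (‖y‖ ^ 2) 1
  calc exp (inner ℝ y z - κ * ‖y‖ ^ 2)
      = exp (-(κ * ‖y‖ ^ 2)) * exp (inner ℝ y z) := by rw [← exp_add]; ring_nf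
    _ ≤ exp (-(κ * ‖y‖ ^ 2)) *
          (inner ℝ y z + exp (κ * ‖y‖ ^ 2 + ρ * (‖z‖ ^ 2 - log 2))) := by
        gcongr
        exact exp_inner_le hκ y z
    _ = inner ℝ (exp (-(κ * ‖y‖ ^ 2)) • y) z + exp (ρ * (‖z‖ ^ 2 - log 2)) := by
        rw [mul_add, ← exp_add, neg_add_cancel_left, real_inner_smul_left]
    _ ≤ inner ℝ (exp (-(κ * ‖y‖ ^ 2)) • y) z + (1 + ρ * (exp (‖z‖ ^ 2) / 2 - 1)) := by
        gcongr
        exact exp_mul_sub_log_le two_pos (by positivity) (min_le_right _ _) _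
    _ = _ := by ring

lemma norm_exp_neg_smul_le_one {κ : ℝ} (hκ : 1 / 4 ≤ κ) (y : V) :
    ‖exp (-(κ * ‖y‖ ^ 2)) • y‖ ≤ 1 := by
  have hy : ‖y‖ ≤ exp (κ * ‖y‖ ^ 2) := by
    nlinarith [add_one_le_exp (κ * ‖y‖ ^ 2), sq_nonneg (‖y‖ / 2 - 1), sq_nonneg ‖y‖]
  rw [norm_smul, norm_of_nonneg (exp_pos _).le, exp_neg, inv_mul_le_one₀ (exp_pos _)]
  exact hy

lemma inner_sub_mul_norm_sq_le {κ : ℝ} (hκ : 1 / 4 ≤ κ) (y z : V) :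
    inner ℝ y z - κ * ‖y‖ ^ 2 ≤ ‖z‖ ^ 2 := by
  nlinarith [real_inner_le_norm y z, sq_nonneg (‖y‖ / 2 - ‖z‖), sq_nonneg ‖y‖]

lemma norm_add_sq_div_le {κ b : ℝ} (hκ : 1 / 4 ≤ κ) (hb : 0 < b) (x z : V) :
    ‖x + z‖ ^ 2 / (b + 4 * κ) ≤ ‖x‖ ^ 2 / b +
      ((1 - (b + 4 * κ)⁻¹) * (inner ℝ ((2 / (b + 4 * κ - 1)) • x) z -
          κ * ‖(2 / (b + 4 * κ - 1)) • x‖ ^ 2) + (b + 4 * κ)⁻¹ * ‖z‖ ^ 2) := by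
  set p := b + 4 * κ with hp
  have hp₁ : 0 < p - 1 := by linarith [hp]
  have hp₀ : 0 < p := by linarith
  have hcoeff : 1 / p + 4 * κ / (p * (p - 1)) ≤ 1 / b := by
    have : 4 * κ / (p * (p - 1)) ≤ 4 * κ / (p * b) := by gcongr; linarith
    have : 1 / p + 4 * κ / (p * b) = 1 / b := by
      field_simp
      linarith
    linarith
  rw [real_inner_smul_left, norm_smul, mul_pow, norm_eq_abs, sq_abs, norm_add_sq_real]
  calc (‖x‖ ^ 2 + 2 * inner ℝ x z + ‖z‖ ^ 2) / p
      = (1 / p + 4 * κ / (p * (p - 1))) * ‖x‖ ^ 2 +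
          ((1 - p⁻¹) * (2 / (p - 1) * inner ℝ x z - κ * ((2 / (p - 1)) ^ 2 * ‖x‖ ^ 2)) +
            p⁻¹ * ‖z‖ ^ 2) := by
        field_simp
        ring
    _ ≤ 1 / b * ‖x‖ ^ 2 + _ := by gcongr
    _ = _ := by rw [one_div_mul_eq_div]

lemma exp_norm_add_sq_div_le {κ b : ℝ} (hκ : 1 / 4 ≤ κ) (hb : 0 < b) (x z : V) :
    exp (‖x + z‖ ^ 2 / (b + 4 * κ)) ≤
      ((b + 4 * κ) / b) ^ (log 2 / (4 * κ)) * exp (‖x‖ ^ 2 / b) *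
      ((1 - (b + 4 * κ)⁻¹) * exp (inner ℝ ((2 / (b + 4 * κ - 1)) • x) z -
          κ * ‖(2 / (b + 4 * κ - 1)) • x‖ ^ 2) + (b + 4 * κ)⁻¹ * (exp (‖z‖ ^ 2) / 2)) := by
  have hsplit := norm_add_sq_div_le hκ hb x z
  have hrpow : (2 : ℝ) ^ (b + 4 * κ)⁻¹ ≤ ((b + 4 * κ) / b) ^ (log 2 / (4 * κ)) :=
    rpow_inv_add_le_div_rpow one_le_two hb (by linarith)
  set u := inner ℝ ((2 / (b + 4 * κ - 1)) • x) z - κ * ‖(2 / (b + 4 * κ - 1)) • x‖ ^ 2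
  have hp : 1 ≤ b + 4 * κ := by linarith
  set p := b + 4 * κ
  have hconv : exp ((1 - p⁻¹) * u + p⁻¹ * (‖z‖ ^ 2 - log 2)) ≤
      (1 - p⁻¹) * exp u + p⁻¹ * (exp (‖z‖ ^ 2) / 2) := by
    have := convexOn_exp.2 (Set.mem_univ u) (Set.mem_univ (‖z‖ ^ 2 - log 2))
      (sub_nonneg.2 (inv_le_one_of_one_le₀ hp)) (by positivity) (sub_add_cancel 1 p⁻¹)
    simpa only [smul_eq_mul, exp_sub, exp_log two_pos] using this
  calc exp (‖x + z‖ ^ 2 / p)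
      ≤ exp (log 2 * p⁻¹ + ‖x‖ ^ 2 / b +
          ((1 - p⁻¹) * u + p⁻¹ * (‖z‖ ^ 2 - log 2))) := exp_le_exp.2 (by linarith)
    _ = 2 ^ p⁻¹ * exp (‖x‖ ^ 2 / b) * exp ((1 - p⁻¹) * u + p⁻¹ * (‖z‖ ^ 2 - log 2)) := by
        rw [exp_add, exp_add, rpow_def_of_pos two_pos]
    _ ≤ _ := by gcongr

end InnerProductSpace

section CondExp

variable {Ω : Type*} {m m0 : MeasurableSpace Ω} {μ : Measure Ω}

lemma lintegral_mul_condLExp (hm : m ≤ m0) [SigmaFinite (μ.trim hm)] {X Y : Ω → ENNReal}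
    (hX : Measurable[m] X) (hY : AEMeasurable Y μ) :
    ∫⁻ ω, X ω * μ⁻[Y | m] ω ∂μ = ∫⁻ ω, X ω * Y ω ∂μ := by
  have htrim : (μ.withDensity (μ⁻[Y | m])).trim hm = (μ.withDensity Y).trim hm := by
    refine @Measure.ext _ m _ _ fun s hs => ?_
    rw [trim_measurableSet_eq hm hs, trim_measurableSet_eq hm hs, withDensity_apply _ (hm s hs),
      withDensity_apply _ (hm s hs), setLIntegral_condLExp hm μ Y hs]
  have hdensity (W : Ω → ENNReal) (hW : AEMeasurable W μ) :
      ∫⁻ ω, X ω * W ω ∂μ = ∫⁻ ω, X ω ∂(μ.withDensity W).trim hm := by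
    rw [lintegral_trim hm hX,
      lintegral_withDensity_eq_lintegral_mul₀ hW (hX.mono hm le_rfl).aemeasurable]
    exact lintegral_congr fun ω => mul_comm _ _
  rw [hdensity _ (measurable_condLExp' m μ Y).aemeasurable, htrim, hdensity _ hY]

lemma integrable_mul_of_integrable_mul_condExp (hm : m ≤ m0) [SigmaFinite (μ.trim hm)]
    {X Y : Ω → ℝ} (hX : StronglyMeasurable[m] X) (hY : Integrable Y μ) (hY₀ : 0 ≤ᵐ[μ] Y)
    (hXY : Integrable (X * μ[Y | m]) μ) : Integrable (X * Y) μ := by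
  refine ⟨(hX.mono hm).aestronglyMeasurable.mul hY.aestronglyMeasurable, ?_⟩
  calc ∫⁻ ω, ‖(X * Y) ω‖ₑ ∂μ
      = ∫⁻ ω, ‖X ω‖ₑ * ‖Y ω‖ₑ ∂μ := by simp only [Pi.mul_apply, enorm_mul]
    _ = ∫⁻ ω, ‖X ω‖ₑ * μ⁻[fun ω => ‖Y ω‖ₑ | m] ω ∂μ :=
        (lintegral_mul_condLExp hm hX.enorm hY.aestronglyMeasurable.enorm).symm
    _ = ∫⁻ ω, ‖(X * μ[Y | m]) ω‖ₑ ∂μ := lintegral_congr_ae <| by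
        filter_upwards [condLExp_enorm m hY hY₀] with ω hω
        rw [hω, Pi.mul_apply, enorm_mul]
    _ < ⊤ := hXY.2

lemma integrable_mul_of_condExp_le_one (hm : m ≤ m0) [SigmaFinite (μ.trim hm)]
    {X Y : Ω → ℝ} (hX : StronglyMeasurable[m] X) (hX_int : Integrable X μ)
    (hY : Integrable Y μ) (hY₀ : 0 ≤ᵐ[μ] Y) (hY₁ : μ[Y | m] ≤ᵐ[μ] 1) :
    Integrable (X * Y) μ := by
  refine integrable_mul_of_integrable_mul_condExp hm hX hY hY₀ ?_
  refine hX_int.mul_bdd (c := 1) integrable_condExp.aestronglyMeasurable ?_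
  filter_upwards [condExp_nonneg hY₀, hY₁] with ω h₀ h₁
  rwa [Real.norm_of_nonneg h₀]

lemma condExp_mul_le_of_condExp_le_one {X Y : Ω → ℝ} (hX : StronglyMeasurable[m] X) (hX₀ : 0 ≤ X)
    (hXY : Integrable (X * Y) μ) (hY : Integrable Y μ) (hY₁ : μ[Y | m] ≤ᵐ[μ] 1) :
    μ[X * Y | m] ≤ᵐ[μ] X := by
  filter_upwards [condExp_mul_of_stronglyMeasurable_left hX hXY hY, hY₁] with ω hω h₁
  rw [hω]
  exact mul_le_of_le_one_right (hX₀ ω) h₁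

lemma integrable_inner_of_bound {V : Type*} [NormedAddCommGroup V] [InnerProductSpace ℝ V]
    {W Z : Ω → V} {C : ℝ} (hW : AEStronglyMeasurable W μ) (hWC : ∀ ω, ‖W ω‖ ≤ C)
    (hZ : Integrable Z μ) : Integrable (fun ω => inner ℝ (W ω) (Z ω)) μ :=
  (innerSL ℝ).integrable_of_bilin_of_bdd_left C hW (ae_of_all _ hWC) hZ

lemma condExp_inner_eq_zero {V : Type*} [NormedAddCommGroup V] [InnerProductSpace ℝ V]
    [CompleteSpace V] {W Z : Ω → V} (hW : StronglyMeasurable[m] W) (hZ : Integrable Z μ)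
    (hWZ : Integrable (fun ω => inner ℝ (W ω) (Z ω)) μ) (hZ₀ : μ[Z | m] =ᵐ[μ] 0) :
    μ[fun ω => inner ℝ (W ω) (Z ω) | m] =ᵐ[μ] 0 := by
  filter_upwards [condExp_bilin_of_stronglyMeasurable_left (innerSL ℝ) hW hWZ hZ, hZ₀]
    with ω hω h₀
  rw [h₀] at hω
  exact hω.trans (inner_zero_right _)

lemma condExp_convexCombination_le {X Y : Ω → ℝ} {t C : ℝ} (ht₀ : 0 ≤ t) (ht₁ : t ≤ 1)
    (hX : Integrable X μ) (hY : Integrable Y μ) (hXC : ∀ᵐ ω ∂μ, μ[X | m] ω ≤ C)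
    (hYC : ∀ᵐ ω ∂μ, μ[Y | m] ω ≤ C) : ∀ᵐ ω ∂μ, μ[(1 - t) • X + t • Y | m] ω ≤ C := by
  filter_upwards [condExp_add (hX.smul (1 - t)) (hY.smul t) m, condExp_smul (1 - t) X m,
    condExp_smul t Y m, hXC, hYC] with ω hadd hsmulX hsmulY hX hY
  rw [hadd, Pi.add_apply, hsmulX, hsmulY]
  exact (convex_Iic C) hX hY (sub_nonneg.2 ht₁) ht₀ (sub_add_cancel 1 t)

end CondExp

section Filtration

variable {Ω : Type*} {m0 : MeasurableSpace Ω} {μ : Measure Ω} {ℱ : Filtration ℕ m0}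
  {V : Type*} [NormedAddCommGroup V] {z : ℕ → Ω → V} {n : ℕ}

lemma stronglyMeasurable_sum_range_of_succ
    (hmeas : ∀ τ < n, StronglyMeasurable[ℱ (τ + 1)] (z τ)) :
    StronglyMeasurable[ℱ n] fun ω => ∑ τ ∈ Finset.range n, z τ ω :=
  Finset.stronglyMeasurable_fun_sum _ fun τ hτ =>
    (hmeas τ (Finset.mem_range.1 hτ)).mono (ℱ.mono (Finset.mem_range.1 hτ))

lemma condExp_sum_range_eq_zero [SigmaFiniteFiltration μ ℱ] [NormedSpace ℝ V] [CompleteSpace V]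
    (hint : ∀ τ < n, Integrable (z τ) μ) (hz : ∀ τ < n, μ[z τ | ℱ τ] =ᵐ[μ] 0) :
    μ[∑ τ ∈ Finset.range n, z τ | ℱ 0] =ᵐ[μ] 0 := by
  have hzero (τ) (hτ : τ ∈ Finset.range n) : μ[z τ | ℱ 0] =ᵐ[μ] 0 := calc
    μ[z τ | ℱ 0] =ᵐ[μ] μ[μ[z τ | ℱ τ] | ℱ 0] :=
      (condExp_condExp_of_le (ℱ.mono (Nat.zero_le τ)) (ℱ.le τ)).symm
    _ =ᵐ[μ] μ[0 | ℱ 0] := condExp_congr_ae (hz τ (Finset.mem_range.1 hτ))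
    _ = 0 := condExp_zero
  calc μ[∑ τ ∈ Finset.range n, z τ | ℱ 0]
      =ᵐ[μ] ∑ τ ∈ Finset.range n, μ[z τ | ℱ 0] :=
        condExp_finsetSum (fun τ hτ => hint τ (Finset.mem_range.1 hτ)) (ℱ 0)
    _ =ᵐ[μ] ∑ _ ∈ Finset.range n, 0 := eventuallyEq_sum hzero
    _ = 0 := Finset.sum_const_zero

end Filtration

section CondSubgaussian

open Real

variable {Ω : Type*} {m m0 : MeasurableSpace Ω} {μ : Measure Ω}
  {V : Type*} [NormedAddCommGroup V] [InnerProductSpace ℝ V]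

/-- A random vector which, conditionally on `m`, is centred and sub-Gaussian with `ψ₂`-norm at
most one, in the sense that `E[exp (‖Z‖²) | m] ≤ 2`. The two integrability fields prevent the
conditional expectations from taking the junk value `0`. -/
structure IsCondSubgaussian (Z : Ω → V) (m : MeasurableSpace Ω) {m0 : MeasurableSpace Ω}
    (μ : Measure Ω) : Prop where
  integrable : Integrable Z μ
  integrable_exp : Integrable (fun ω => exp (‖Z ω‖ ^ 2)) μ
  condExp_eq_zero : μ[Z | m] =ᵐ[μ] 0
  condExp_exp_le : ∀ᵐ ω ∂μ, (μ[fun ω => exp (‖Z ω‖ ^ 2) | m]) ω ≤ 2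

namespace IsCondSubgaussian

variable {S Y Z : Ω → V} {κ b : ℝ}

lemma integrable_exp_inner_sub (hZ : IsCondSubgaussian Z m μ) (hY : AEStronglyMeasurable Y μ)
    (hκ : 1 / 4 ≤ κ) : Integrable (fun ω => exp (inner ℝ (Y ω) (Z ω) - κ * ‖Y ω‖ ^ 2)) μ := by
  have hZ_meas := hZ.integrable.aestronglyMeasurable
  refine hZ.integrable_exp.mono' (by fun_prop) (ae_of_all _ fun ω => ?_)
  rw [norm_of_nonneg (exp_pos _).le]
  exact exp_le_exp.2 (inner_sub_mul_norm_sq_le hκ _ _)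

lemma condExp_exp_div_two_le_one (hZ : IsCondSubgaussian Z m μ) :
    μ[fun ω => exp (‖Z ω‖ ^ 2) / 2 | m] ≤ᵐ[μ] 1 := by
  have hdiv : (fun ω => exp (‖Z ω‖ ^ 2) / 2) = (1 / 2 : ℝ) • fun ω => exp (‖Z ω‖ ^ 2) :=
    funext fun ω => (one_div_mul_eq_div _ _).symm
  rw [hdiv]
  filter_upwards [condExp_smul (1 / 2 : ℝ) (fun ω => exp (‖Z ω‖ ^ 2)) m, hZ.condExp_exp_le]
    with ω hsmul hle
  rw [hsmul, Pi.smul_apply, smul_eq_mul, Pi.one_apply]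
  linarith

variable [IsFiniteMeasure μ]

lemma condExp_exp_div_two_sub_one_nonpos (hm : m ≤ m0) (hZ : IsCondSubgaussian Z m μ) :
    μ[fun ω => exp (‖Z ω‖ ^ 2) / 2 - 1 | m] ≤ᵐ[μ] 0 := by
  filter_upwards [hZ.condExp_exp_div_two_le_one,
    condExp_sub (hZ.integrable_exp.div_const 2) (integrable_const 1) m] with ω hle hsub
  refine hsub.trans_le ?_
  rw [Pi.sub_apply, condExp_const hm]
  exact sub_nonpos.2 hle

variable [CompleteSpace V]

lemma condExp_exp_inner_sub_le_one (hm : m ≤ m0) (hZ : IsCondSubgaussian Z m μ)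
    (hY : StronglyMeasurable[m] Y) (hκ : log 2 + 1 / 4 ≤ κ) :
    μ[fun ω => exp (inner ℝ (Y ω) (Z ω) - κ * ‖Y ω‖ ^ 2) | m] ≤ᵐ[μ] 1 := by
  have hκ' : 1 / 4 ≤ κ := by linarith [log_nonneg one_le_two]
  set W : Ω → V := fun ω => exp (-(κ * ‖Y ω‖ ^ 2)) • Y ω
  set ρ : Ω → ℝ := fun ω => min (‖Y ω‖ ^ 2) 1
  set D : Ω → ℝ := fun ω => exp (‖Z ω‖ ^ 2) / 2 - 1
  have hW : StronglyMeasurable[m] W :=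
    have : Continuous fun y : V => exp (-(κ * ‖y‖ ^ 2)) • y := by fun_prop
    this.comp_stronglyMeasurable hY
  have hρ : StronglyMeasurable[m] ρ :=
    have : Continuous fun y : V => min (‖y‖ ^ 2) 1 := by fun_prop
    this.comp_stronglyMeasurable hY
  have hWZ_int : Integrable (fun ω => inner ℝ (W ω) (Z ω)) μ :=
    integrable_inner_of_bound (hW.mono hm).aestronglyMeasurable
      (fun ω => norm_exp_neg_smul_le_one hκ' (Y ω)) hZ.integrable
  have hD_int : Integrable D μ := (hZ.integrable_exp.div_const 2).sub (integrable_const 1)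
  have hρD_int : Integrable (ρ * D) μ :=
    hD_int.bdd_mul (c := 1) (hρ.mono hm).aestronglyMeasurable <| ae_of_all _ fun ω => by
      rw [norm_of_nonneg (by positivity)]
      exact min_le_right _ _
  have hmono : μ[fun ω => exp (inner ℝ (Y ω) (Z ω) - κ * ‖Y ω‖ ^ 2) | m] ≤ᵐ[μ]
      μ[(fun _ => 1) + (fun ω => inner ℝ (W ω) (Z ω)) + ρ * D | m] :=
    condExp_mono (hZ.integrable_exp_inner_sub (hY.mono hm).aestronglyMeasurable hκ')
      (((integrable_const 1).add hWZ_int).add hρD_int)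
      (ae_of_all _ fun ω => exp_inner_sub_le hκ _ _)
  filter_upwards [hmono, condExp_add ((integrable_const 1).add hWZ_int) hρD_int m,
    condExp_add (integrable_const (1 : ℝ)) hWZ_int m,
    condExp_inner_eq_zero hW hZ.integrable hWZ_int hZ.condExp_eq_zero,
    condExp_mul_of_stronglyMeasurable_left hρ hρD_int hD_int,
    hZ.condExp_exp_div_two_sub_one_nonpos hm] with ω hle hadd hadd' hinner hmul hD
  have hρD : ρ ω * μ[D | m] ω ≤ 0 := mul_nonpos_of_nonneg_of_nonpos (by positivity) hD
  calc _ ≤ _ := hle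
    _ = 1 + 0 + ρ ω * μ[D | m] ω := by
        rw [hadd, Pi.add_apply, hadd', Pi.add_apply, hinner, hmul, condExp_const hm]; rfl
    _ ≤ 1 := by linarith

lemma condExp_exp_norm_add_sq_div_le (hm : m ≤ m0) (hZ : IsCondSubgaussian Z m μ)
    (hS : StronglyMeasurable[m] S) (hκ : log 2 + 1 / 4 ≤ κ) (hb : 0 < b)
    (hS_int : Integrable (fun ω => exp (‖S ω‖ ^ 2 / b)) μ) :
    Integrable (fun ω => exp (‖S ω + Z ω‖ ^ 2 / (b + 4 * κ))) μ ∧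
      μ[fun ω => exp (‖S ω + Z ω‖ ^ 2 / (b + 4 * κ)) | m] ≤ᵐ[μ]
        fun ω => ((b + 4 * κ) / b) ^ (log 2 / (4 * κ)) * exp (‖S ω‖ ^ 2 / b) := by
  have hκ' : 1 / 4 ≤ κ := by linarith [log_nonneg one_le_two]
  set p := b + 4 * κ with hp
  have hp₀ : 0 < p := by linarith [hp]
  have hp₁ : p⁻¹ ≤ 1 := inv_le_one_of_one_le₀ (by linarith)
  set Y : Ω → V := fun ω => (2 / (p - 1)) • S ω
  have hY : StronglyMeasurable[m] Y := hS.const_smul _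
  set G : Ω → ℝ := fun ω => exp (inner ℝ (Y ω) (Z ω) - κ * ‖Y ω‖ ^ 2)
  set H : Ω → ℝ := fun ω => exp (‖Z ω‖ ^ 2) / 2
  set U : Ω → ℝ := (1 - p⁻¹) • G + p⁻¹ • H
  set X : Ω → ℝ := fun ω => (p / b) ^ (log 2 / (4 * κ)) * exp (‖S ω‖ ^ 2 / b)
  have hX : StronglyMeasurable[m] X :=
    have : Continuous fun x : V => (p / b) ^ (log 2 / (4 * κ)) * exp (‖x‖ ^ 2 / b) := by fun_prop
    this.comp_stronglyMeasurable hS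
  have hX₀ : 0 ≤ X := fun ω => mul_nonneg (rpow_nonneg (div_pos hp₀ hb).le _) (exp_pos _).le
  have hG_int : Integrable G μ := hZ.integrable_exp_inner_sub (hY.mono hm).aestronglyMeasurable hκ'
  have hH_int : Integrable H μ := hZ.integrable_exp.div_const 2
  have hU_int : Integrable U μ := (hG_int.smul _).add (hH_int.smul _)
  have hU₀ (ω) : 0 ≤ U ω :=
    add_nonneg (mul_nonneg (sub_nonneg.2 hp₁) (exp_pos _).le)
      (mul_nonneg (inv_nonneg.2 hp₀.le) (div_pos (exp_pos _) two_pos).le)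
  have hU₁ : μ[U | m] ≤ᵐ[μ] 1 :=
    condExp_convexCombination_le (by positivity) hp₁ hG_int hH_int
      (hZ.condExp_exp_inner_sub_le_one hm hY hκ) hZ.condExp_exp_div_two_le_one
  have hXU_int : Integrable (X * U) μ :=
    integrable_mul_of_condExp_le_one hm hX (hS_int.const_mul _) hU_int (ae_of_all _ hU₀) hU₁
  have hle (ω) : exp (‖S ω + Z ω‖ ^ 2 / p) ≤ (X * U) ω :=
    exp_norm_add_sq_div_le hκ' hb (S ω) (Z ω)
  have hint : Integrable (fun ω => exp (‖S ω + Z ω‖ ^ 2 / p)) μ := by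
    have hS_meas := (hS.mono hm).aestronglyMeasurable (μ := μ)
    have hZ_meas := hZ.integrable.aestronglyMeasurable
    refine hXU_int.mono' (by fun_prop) (ae_of_all _ fun ω => ?_)
    rw [norm_of_nonneg (exp_pos _).le]
    exact hle ω
  exact ⟨hint, (condExp_mono hint hXU_int (ae_of_all _ hle)).trans <|
    condExp_mul_le_of_condExp_le_one hX hX₀ hXU_int hU_int hU₁⟩

end IsCondSubgaussian

variable [IsFiniteMeasure μ] [CompleteSpace V] {ℱ : Filtration ℕ m0} {z : ℕ → Ω → V} {n : ℕ}

lemma condExp_exp_norm_sum_sq_div_le {κ b : ℝ} (hκ : log 2 + 1 / 4 ≤ κ) (hb : 0 < b)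
    (hmeas : ∀ τ < n, StronglyMeasurable[ℱ (τ + 1)] (z τ))
    (hz : ∀ τ < n, IsCondSubgaussian (z τ) (ℱ τ) μ) :
    Integrable (fun ω => exp (‖∑ τ ∈ Finset.range n, z τ ω‖ ^ 2 / (b + 4 * κ * n))) μ ∧
      ∀ᵐ ω ∂μ, (μ[fun ω => exp (‖∑ τ ∈ Finset.range n, z τ ω‖ ^ 2 / (b + 4 * κ * n)) | ℱ 0]) ω ≤
        ((b + 4 * κ * n) / b) ^ (log 2 / (4 * κ)) := by
  have hκ₀ : 0 < κ := by linarith [log_nonneg one_le_two]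
  induction n with
  | zero => simp [condExp_const (ℱ.le 0), hb.ne']
  | succ k ih =>
    obtain ⟨hk_int, hk_le⟩ := ih (fun τ hτ => hmeas τ (hτ.trans k.lt_succ_self))
      (fun τ hτ => hz τ (hτ.trans k.lt_succ_self))
    have hbk : 0 < b + 4 * κ * k := by positivity
    obtain ⟨hint, hstep⟩ := (hz k k.lt_succ_self).condExp_exp_norm_add_sq_div_le (ℱ.le k)
      (stronglyMeasurable_sum_range_of_succ fun τ hτ => hmeas τ (hτ.trans k.lt_succ_self))
      hκ hbk hk_int
    have hsucc : b + 4 * κ * (k + 1 : ℕ) = b + 4 * κ * k + 4 * κ := by push_cast; ring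
    simp only [Finset.sum_range_succ, hsucc]
    refine ⟨hint, ?_⟩
    filter_upwards [condExp_condExp_of_le (ℱ.mono k.zero_le) (ℱ.le k) (μ := μ) (f := fun ω =>
        exp (‖∑ τ ∈ Finset.range k, z τ ω + z k ω‖ ^ 2 / (b + 4 * κ * k + 4 * κ))),
      condExp_mono (m := ℱ 0) integrable_condExp (hk_int.const_mul _) hstep,
      condExp_smul (((b + 4 * κ * k + 4 * κ) / (b + 4 * κ * k)) ^ (log 2 / (4 * κ)))
        (fun ω => exp (‖∑ τ ∈ Finset.range k, z τ ω‖ ^ 2 / (b + 4 * κ * k))) (ℱ 0), hk_le]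
      with ω htower hmono hsmul hle
    calc _ ≤ _ := htower.ge.trans hmono
      _ = _ := hsmul
      _ ≤ ((b + 4 * κ * k + 4 * κ) / (b + 4 * κ * k)) ^ (log 2 / (4 * κ)) *
            ((b + 4 * κ * k) / b) ^ (log 2 / (4 * κ)) := by
          refine mul_le_mul_of_nonneg_left hle ?_
          positivity
      _ = ((b + 4 * κ * k + 4 * κ) / b) ^ (log 2 / (4 * κ)) := by
          rw [← mul_rpow (by positivity) (by positivity), div_mul_div_cancel₀ hbk.ne']

lemma thirtyTwo_rpow_le_two : (32 : ℝ) ^ (log 2 / (4 * (31 / 32))) ≤ 2 := by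
  have hexp : log 2 / (4 * (31 / 32)) ≤ 1 / 5 := by
    rw [div_le_iff₀ (by norm_num)]
    linarith [log_two_lt_d9]
  calc (32 : ℝ) ^ (log 2 / (4 * (31 / 32))) ≤ 32 ^ (1 / 5 : ℝ) :=
        rpow_le_rpow_of_exponent_le (by norm_num) hexp
    _ = ((2 : ℝ) ^ (5 : ℝ)) ^ (1 / 5 : ℝ) := by norm_num
    _ = 2 := by rw [← rpow_mul two_pos.le]; norm_num

lemma condExp_exp_norm_sum_sq_div_four_mul_le_two (hn : 1 ≤ n)
    (hmeas : ∀ τ < n, StronglyMeasurable[ℱ (τ + 1)] (z τ))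
    (hz : ∀ τ < n, IsCondSubgaussian (z τ) (ℱ τ) μ) :
    ∀ᵐ ω ∂μ, (μ[fun ω => exp (‖∑ τ ∈ Finset.range n, z τ ω‖ ^ 2 / (4 * n)) | ℱ 0]) ω ≤ 2 := by
  have hn₀ : (0 : ℝ) < n := by exact_mod_cast hn
  have hκ : log 2 + 1 / 4 ≤ 31 / 32 := by linarith [log_two_lt_d9]
  have hfour : (n / 8 : ℝ) + 4 * (31 / 32) * n = 4 * n := by ring
  have hratio : 4 * (n : ℝ) / (n / 8) = 32 := by field_simp; norm_num
  have hb : (0 : ℝ) < n / 8 := div_pos hn₀ (by norm_num)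
  have hle := (condExp_exp_norm_sum_sq_div_le hκ hb hmeas hz).2
  simp only [hfour, hratio] at hle
  filter_upwards [hle] with ω hω using hω.trans thirtyTwo_rpow_le_two

end CondSubgaussian

theorem average_subgaussian_random_vectors_general
    {Ω : Type*} {m0 : MeasurableSpace Ω} {μ : Measure Ω} [IsFiniteMeasure μ]
    {V : Type*} [NormedAddCommGroup V] [InnerProductSpace ℝ V] [CompleteSpace V]
    {ℱ : Filtration ℕ m0} {n : ℕ} (hn : 1 ≤ n) {z : ℕ → Ω → V}
    (hmeas : ∀ τ < n, StronglyMeasurable[ℱ (τ + 1)] (z τ))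
    (hz : ∀ τ < n, IsCondSubgaussian (z τ) (ℱ τ) μ) :
    (μ[fun ω => (1 / (2 * √n)) • ∑ τ ∈ Finset.range n, z τ ω | ℱ 0] =ᵐ[μ] 0) ∧
      ∀ᵐ ω ∂μ,
        (μ[fun ω => Real.exp (‖(1 / (2 * √n)) • ∑ τ ∈ Finset.range n, z τ ω‖ ^ 2) | ℱ 0]) ω
          ≤ 2 := by
  constructor
  · have hsum := condExp_sum_range_eq_zero (fun τ hτ => (hz τ hτ).integrable)
      (fun τ hτ => (hz τ hτ).condExp_eq_zero)
    have hfun : (fun ω => (1 / (2 * √n)) • ∑ τ ∈ Finset.range n, z τ ω) =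
        (1 / (2 * √n)) • ∑ τ ∈ Finset.range n, z τ := by
      ext ω
      rw [Pi.smul_apply, Finset.sum_apply]
    rw [hfun]
    filter_upwards [condExp_smul (1 / (2 * √n)) (∑ τ ∈ Finset.range n, z τ) (ℱ 0), hsum]
      with ω hsmul hzero
    rw [hsmul, Pi.smul_apply, hzero, Pi.zero_apply, smul_zero]
  · simp only [norm_one_div_two_mul_sqrt_smul_sq n.cast_nonneg]
    exact condExp_exp_norm_sum_sq_div_four_mul_le_two hn hmeas hz

/-- **Conditional sub-Gaussianity of an average of conditionally sub-Gaussian random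
vectors.** Let `(F_τ)` be a filtration and `z_0, …, z_{E-1} : Ω → ℝ^d` (`E ≥ 1`) random
vectors with `z_τ` being `F_{τ+1}`-measurable, `E[z_τ | F_τ] = 0` a.s. and
`E[exp(‖z_τ‖²) | F_τ] ≤ 2` a.s. for all `τ < E`. Then the normalized sum
`z := (1/(2√E)) ∑_{τ<E} z_τ` satisfies `E[z | F_0] = 0` a.s. and
`E[exp(‖z‖²) | F_0] ≤ 2` a.s. -/
theorem average_subgaussian_random_vectors
    {Ω : Type*} {m0 : MeasurableSpace Ω} (P : Measure Ω) [IsProbabilityMeasure P]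
    (ℱ : Filtration ℕ m0) (d E : ℕ) (hE : 1 ≤ E)
    (z : ℕ → Ω → EuclideanSpace ℝ (Fin d))
    (hmeas : ∀ τ < E, StronglyMeasurable[ℱ (τ + 1)] (z τ))
    (hint : ∀ τ < E, Integrable (z τ) P)
    (hint2 : ∀ τ < E, Integrable (fun ω => Real.exp (‖z τ ω‖ ^ 2)) P)
    (hmart : ∀ τ < E, P[z τ|ℱ τ] =ᵐ[P] 0)
    (hsub : ∀ τ < E, ∀ᵐ ω ∂P,
      (P[fun ω' => Real.exp (‖z τ ω'‖ ^ 2)|ℱ τ]) ω ≤ 2) :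
    (P[fun ω => (1 / (2 * Real.sqrt E)) • ∑ τ ∈ Finset.range E, z τ ω|ℱ 0]
        =ᵐ[P] 0) ∧
      ∀ᵐ ω ∂P,
        (P[fun ω' =>
            Real.exp (‖(1 / (2 * Real.sqrt E)) • ∑ τ ∈ Finset.range E, z τ ω'‖ ^ 2)|ℱ 0]) ω
          ≤ 2 := by
  exact average_subgaussian_random_vectors_general hE hmeas fun τ hτ =>
    ⟨hint τ hτ, hint2 τ hτ, hmart τ hτ, hsub τ hτ⟩
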